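/- Let α > 0 and 0 < u_min ≤ u_max. For every u ∈ U = [u_min, u_max]^K, the α-fairness value admits the dual (conjugate-equivalence) representation F_α(u) = min_{w ∈ W} [Φ_α(w) − ⟨w, u⟩], where W = [−1/u_min^α, −1/u_max^α]^K, and the minimum is attained at the point w with components w_k = −u_k^{−α}, which belongs to W. -/

import Mathlib

/-!
The objective `Φ_α(w) - ⟨w, u⟩` is separable, so everything reduces to one coordinate. Put
`f_α(u) = (u^{1-α} - 1)/(1-α)` (or `log u` for `α = 1`). Substituting `v = -w > 0`, i.e. `v = t^{-α}`
with `t = v^{-1/α}`, turns `φ_α(w) - w u` into `f_α(t) + f_α'(t) (u - t)`, the tangent line of the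
concave function `f_α` at `t`, evaluated at `u`. Hence it is at least `f_α(u)`, with equality at
`t = u`. After scaling to `s = u / t` the inequality is the Bernoulli-type bound `f_α(s) ≤ s - 1`
(`scalarFair_le_sub_one`), which follows from weighted AM-GM. The point `-u_k^{-α}` lies in the box
because `x ↦ x^α` is increasing.
-/

/-- The generalized α-fairness function on `ℝ^K` (equation (1) of the paper). -/
noncomputable def Falpha {K : ℕ} (α : ℝ) (u : Fin K → ℝ) : ℝ :=
  if α = 1 then ∑ k, Real.log (u k)
  else ∑ k, ((u k) ^ (1 - α) - 1) / (1 - α)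

/-- Scalar conjugate term `φ_α` on `(-∞, 0)`. -/
noncomputable def phiAlpha (α : ℝ) (w : ℝ) : ℝ :=
  if α = 1 then -Real.log (-w) - 1
  else (α * (-w) ^ (1 - 1 / α) - 1) / (1 - α)

/-- `Φ_α(w) = ∑_k φ_α(w_k)`, the convex conjugate `(-F_α)^⋆`. -/
noncomputable def PhiAlpha {K : ℕ} (α : ℝ) (w : Fin K → ℝ) : ℝ :=
  ∑ k, phiAlpha α (w k)

/-- The one-coordinate `α`-fairness utility, so that `Falpha α u = ∑ k, scalarFair α (u k)`. -/
noncomputable def scalarFair (α x : ℝ) : ℝ :=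
  if α = 1 then Real.log x else (x ^ (1 - α) - 1) / (1 - α)

lemma Falpha_eq_sum {K : ℕ} (α : ℝ) (u : Fin K → ℝ) :
    Falpha α u = ∑ k, scalarFair α (u k) := by
  unfold Falpha scalarFair
  split_ifs <;> rfl

/-- The tangent line of the concave function `scalarFair α` at `1` lies above it. -/
lemma scalarFair_le_sub_one {α s : ℝ} (hα : 0 < α) (hs : 0 < s) :
    scalarFair α s ≤ s - 1 := by
  unfold scalarFair
  split_ifs with h
  · exact Real.log_le_sub_one_of_pos hs
  rcases lt_or_gt_of_ne h with h | h
  · rw [div_le_iff₀ (by linarith)]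
    have := Real.geom_mean_le_arith_mean2_weighted (w₁ := 1 - α) (w₂ := α) (p₁ := s) (p₂ := 1)
      (by linarith) hα.le hs.le zero_le_one (by ring)
    rw [Real.one_rpow] at this
    linarith
  · rw [div_le_iff_of_neg (by linarith)]
    -- The weights are chosen so that the geometric mean of `s ^ (1 - α)` and `s` is `1`.
    have := Real.geom_mean_le_arith_mean2_weighted (w₁ := 1 / α) (w₂ := (α - 1) / α)
      (p₁ := s ^ (1 - α)) (p₂ := s) (by positivity) (div_nonneg (by linarith) hα.le)
      (Real.rpow_nonneg hs.le _) hs.le (by field_simp; ring)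
    rw [← Real.rpow_mul hs.le, ← Real.rpow_add hs,
      show (1 - α) * (1 / α) + (α - 1) / α = 0 by field_simp; ring, Real.rpow_zero] at this
    have h2 := mul_le_mul_of_nonneg_left this hα.le
    have h3 : α * (1 / α * s ^ (1 - α) + (α - 1) / α * s) = s ^ (1 - α) + (α - 1) * s := by
      field_simp
    linarith

/-- Fenchel-Young inequality in one coordinate. -/
lemma scalarFair_le {α u w : ℝ} (hα : 0 < α) (hu : 0 < u) (hw : w < 0) :
    scalarFair α u ≤ phiAlpha α w - w * u := by
  obtain ⟨v, rfl⟩ : ∃ v, w = -v := ⟨-w, by ring⟩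
  have hv : 0 < v := by linarith
  -- `v ^ (1 / α)` is the reciprocal of the tangency point `t`, so this is the bound at `s = u / t`.
  have key := scalarFair_le_sub_one (s := u * v ^ (1 / α)) hα (by positivity)
  unfold scalarFair at key ⊢
  unfold phiAlpha
  rw [neg_neg]
  split_ifs at key ⊢ with h
  · subst h
    rw [div_one, Real.rpow_one, Real.log_mul hu.ne' hv.ne'] at key
    linarith
  · have hne : 1 - α ≠ 0 := fun h' => h (by linarith)
    have e1 : (u * v ^ (1 / α)) ^ (1 - α) * v ^ (1 - 1 / α) = u ^ (1 - α) := by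
      rw [Real.mul_rpow hu.le (by positivity), ← Real.rpow_mul hv.le, mul_assoc,
        ← Real.rpow_add hv, show 1 / α * (1 - α) + (1 - 1 / α) = 0 by field_simp; ring,
        Real.rpow_zero, mul_one]
    have e2 : v ^ (1 / α) * v ^ (1 - 1 / α) = v := by
      rw [← Real.rpow_add hv, add_sub_cancel, Real.rpow_one]
    have h2 := mul_le_mul_of_nonneg_right key (Real.rpow_nonneg hv.le (1 - 1 / α))
    have e3 : ((u * v ^ (1 / α)) ^ (1 - α) - 1) / (1 - α) * v ^ (1 - 1 / α)
        = (u ^ (1 - α) - v ^ (1 - 1 / α)) / (1 - α) := by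
      rw [← e1]; ring
    have e4 : (u * v ^ (1 / α) - 1) * v ^ (1 - 1 / α) = u * v - v ^ (1 - 1 / α) := by
      linear_combination u * e2
    rw [e3, e4] at h2
    have e5 : (α * v ^ (1 - 1 / α) - 1) / (1 - α) - -v * u - (u ^ (1 - α) - 1) / (1 - α)
        = (u * v - v ^ (1 - 1 / α)) - (u ^ (1 - α) - v ^ (1 - 1 / α)) / (1 - α) := by
      field_simp
      ring
    linarith

/-- Equality in the Fenchel-Young inequality at `w = -u ^ (-α)`. -/
lemma scalarFair_eq {α u : ℝ} (hα : 0 < α) (hu : 0 < u) :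
    phiAlpha α (-u ^ (-α)) - -u ^ (-α) * u = scalarFair α u := by
  have e0 : u ^ (-α) * u = u ^ (1 - α) := by
    rw [← Real.rpow_add_one hu.ne']; congr 1; ring
  rw [neg_mul, e0]
  unfold phiAlpha scalarFair
  rw [neg_neg]
  split_ifs with h
  · subst h
    rw [Real.log_rpow hu, sub_self, Real.rpow_zero]
    ring
  · have hne : 1 - α ≠ 0 := fun h' => h (by linarith)
    rw [← Real.rpow_mul hu.le, show -α * (1 - 1 / α) = 1 - α by field_simp; ring]
    field_simp
    ring

/-- conjugate-equivalence / biconjugate representation, equation (4):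
for `u ∈ U = [u_min, u_max]^K`, `F_α(u) = min_{w ∈ W} [Φ_α(w) − ⟨w, u⟩]` where
`W = [-1/u_min^α, -1/u_max^α]^K`, the minimum being attained at `w_k = -u_k^(-α) ∈ W`. -/
theorem alpha_fairness_dual_representation
    (K : ℕ) (α : ℝ) (hα : 0 < α)
    (umin umax : ℝ) (h0 : 0 < umin) (h1 : umin ≤ umax)
    (W : Set (Fin K → ℝ))
    (hW : W = {w : Fin K → ℝ | ∀ k, w k ∈ Set.Icc (-1 / umin ^ α) (-1 / umax ^ α)})
    (u : Fin K → ℝ) (hu : ∀ k, u k ∈ Set.Icc umin umax)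
    (wstar : Fin K → ℝ) (hwstar : ∀ k, wstar k = -(u k) ^ (-α)) :
    wstar ∈ W ∧
    PhiAlpha α wstar - ∑ k, wstar k * u k = Falpha α u ∧
    ∀ w ∈ W, Falpha α u ≤ PhiAlpha α w - ∑ k, w k * u k := by
  subst hW
  have hpos : ∀ k, 0 < u k := fun k => h0.trans_le (hu k).1
  simp only [Falpha_eq_sum, PhiAlpha, ← Finset.sum_sub_distrib]
  refine ⟨fun k => ?_, Finset.sum_congr rfl fun k _ => ?_, fun w hw =>
    Finset.sum_le_sum fun k _ => scalarFair_le hα (hpos k) ?_⟩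
  · have hk := hpos k
    rw [hwstar, Real.rpow_neg hk.le, ← one_div, ← neg_div]
    simp only [neg_div, Set.mem_Icc, neg_le_neg_iff]
    exact ⟨one_div_le_one_div_of_le (by positivity) (Real.rpow_le_rpow h0.le (hu k).1 hα.le),
      one_div_le_one_div_of_le (by positivity) (Real.rpow_le_rpow hk.le (hu k).2 hα.le)⟩
  · rw [hwstar]
    exact scalarFair_eq hα (hpos k)
  · refine (hw k).2.trans_lt ?_
    have := Real.rpow_pos_of_pos (h0.trans_le h1) α
    exact div_neg_of_neg_of_pos (by norm_num) this
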